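/- If (y, z) is an integer feasible solution of (CP1), then (y, r) with r = Σ_{k=1}^K z^k is an integer feasible solution of (CP2). -/

import Mathlib

open Finset
open scoped Classical

noncomputable section

/-- Radius of a nonempty set `S` of open facilities: the largest, over clients `i`,
of the distance from `i` to the closest facility in `S`. -/
def radius {N M : ℕ} (hN : 0 < N) (d : Fin N → Fin M → ℝ)
    (S : Finset (Fin M)) (hS : S.Nonempty) : ℝ :=
  (univ : Finset (Fin N)).sup' ⟨⟨0, hN⟩, mem_univ _⟩ fun i => S.inf' hS fun j => d i j

/-- Optimal radius of the `p`-center problem. -/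
def opt {N M : ℕ} (hN : 0 < N) (d : Fin N → Fin M → ℝ) (p : ℕ) : ℝ :=
  sInf { r | ∃ S : Finset (Fin M), ∃ hS : S.Nonempty, S.card ≤ p ∧ r = radius hN d S hS }

/-- Objective function `f(y, z) = D^0 + ∑_{k=1}^K (D^k - D^{k-1}) z^k`
(`z` is 0-indexed: entry `k : Fin K` stands for the paper's `z^{k+1}`). -/
def obj {K : ℕ} (D : Fin (K + 1) → ℝ) (z : Fin K → ℝ) : ℝ :=
  D 0 + ∑ k : Fin K, (D k.succ - D k.castSucc) * z k

/-- Ordering constraints `z^k ≥ z^{k+1}`, `k ∈ {1, …, K-1}` (0-indexed `z`). -/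
def Ordered {K : ℕ} (z : Fin K → ℝ) : Prop :=
  ∀ k : Fin K, ∀ h : (k : ℕ) + 1 < K, z ⟨(k : ℕ) + 1, h⟩ ≤ z k

/-- `ActiveIdx d D i k` says that the paper index `κ = k+1` belongs to `S_i ∪ {K}`:
either `κ ≤ K - 1` and some facility `j` satisfies `d i j = D^κ`, or `κ = K`. -/
def ActiveIdx {N M K : ℕ} (d : Fin N → Fin M → ℝ) (D : Fin (K + 1) → ℝ)
    (i : Fin N) (k : Fin K) : Prop :=
  ((k : ℕ) + 1 < K ∧ ∃ j, d i j = D k.succ) ∨ (k : ℕ) + 1 = K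

/-- LP-relaxed feasible set of formulation `(P2)`. -/
def FP2 {N M K : ℕ} (d : Fin N → Fin M → ℝ) (D : Fin (K + 1) → ℝ) (p : ℕ) :
    Set ((Fin M → ℝ) × (Fin K → ℝ)) :=
  { yz | (∀ j, 0 ≤ yz.1 j ∧ yz.1 j ≤ 1) ∧ (∀ k, 0 ≤ yz.2 k ∧ yz.2 k ≤ 1) ∧
    1 ≤ ∑ j, yz.1 j ∧ ∑ j, yz.1 j ≤ (p : ℝ) ∧
    ∀ i : Fin N, ∀ k : Fin K,
      1 ≤ yz.2 k + ∑ j ∈ univ.filter (fun j => d i j < D k.succ), yz.1 j }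

/-- LP-relaxed feasible set of formulation `(CP1)`. -/
def FCP1 {N M K : ℕ} (d : Fin N → Fin M → ℝ) (D : Fin (K + 1) → ℝ) (p : ℕ) :
    Set ((Fin M → ℝ) × (Fin K → ℝ)) :=
  { yz | (∀ j, 0 ≤ yz.1 j ∧ yz.1 j ≤ 1) ∧ (∀ k, 0 ≤ yz.2 k ∧ yz.2 k ≤ 1) ∧
    1 ≤ ∑ j, yz.1 j ∧ ∑ j, yz.1 j ≤ (p : ℝ) ∧ Ordered yz.2 ∧
    ∀ i : Fin N, ∀ k : Fin K, ActiveIdx d D i k →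
      1 ≤ yz.2 k + ∑ j ∈ univ.filter (fun j => d i j < D k.succ), yz.1 j }

/-- Integer feasible solutions of formulation `(CP1)`. -/
def CP1Int {N M K : ℕ} (d : Fin N → Fin M → ℝ) (D : Fin (K + 1) → ℝ) (p : ℕ) :
    Set ((Fin M → ℝ) × (Fin K → ℝ)) :=
  { yz | (∀ j, yz.1 j = 0 ∨ yz.1 j = 1) ∧ (∀ k, yz.2 k = 0 ∨ yz.2 k = 1) ∧
    1 ≤ ∑ j, yz.1 j ∧ ∑ j, yz.1 j ≤ (p : ℝ) ∧ Ordered yz.2 ∧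
    ∀ i : Fin N, ∀ k : Fin K, ActiveIdx d D i k →
      1 ≤ yz.2 k + ∑ j ∈ univ.filter (fun j => d i j < D k.succ), yz.1 j }

/-- LP-relaxed feasible set of formulation `(CP2)`. -/
def FCP2 {N M K : ℕ} (d : Fin N → Fin M → ℝ) (D : Fin (K + 1) → ℝ) (p : ℕ) :
    Set ((Fin M → ℝ) × ℝ) :=
  { yr | (∀ j, 0 ≤ yr.1 j ∧ yr.1 j ≤ 1) ∧ 0 ≤ yr.2 ∧ yr.2 ≤ (K : ℝ) ∧
    1 ≤ ∑ j, yr.1 j ∧ ∑ j, yr.1 j ≤ (p : ℝ) ∧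
    ∀ i : Fin N, ∀ k : Fin K, ActiveIdx d D i k →
      ((k : ℕ) + 1 : ℝ) ≤ yr.2 +
        ((k : ℕ) + 1 : ℝ) * ∑ j ∈ univ.filter (fun j => d i j < D k.succ), yr.1 j }

/-- Integer feasible solutions of formulation `(CP2)`. -/
def CP2Int {N M K : ℕ} (d : Fin N → Fin M → ℝ) (D : Fin (K + 1) → ℝ) (p : ℕ)
    (y : Fin M → ℝ) (r : ℤ) : Prop :=
  (∀ j, y j = 0 ∨ y j = 1) ∧ 0 ≤ r ∧ r ≤ (K : ℤ) ∧
    1 ≤ ∑ j, y j ∧ ∑ j, y j ≤ (p : ℝ) ∧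
    ∀ i : Fin N, ∀ k : Fin K, ActiveIdx d D i k →
      ((k : ℕ) + 1 : ℝ) ≤ (r : ℝ) +
        ((k : ℕ) + 1 : ℝ) * ∑ j ∈ univ.filter (fun j => d i j < D k.succ), y j

/-!
Since `z` is nonincreasing, its first `k` entries are at least `z^k`, so `k z^k ≤ ∑_l z^l = r`.
Multiplying the covering constraint `1 ≤ z^k + s` of (CP1) by `k` therefore gives the constraint
`k ≤ r + k s` of (CP2).
-/

lemma nonneg_and_le_one_of_eq_zero_or_eq_one {R : Type*} [Zero R] [One R] [Preorder R]
    [ZeroLEOneClass R] {x : R} (hx : x = 0 ∨ x = 1) : 0 ≤ x ∧ x ≤ 1 := by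
  rcases hx with rfl | rfl
  · exact ⟨le_rfl, zero_le_one⟩
  · exact ⟨zero_le_one, le_rfl⟩

lemma card_Iic_nsmul_le_sum_of_antitone {ι R : Type*} [Fintype ι] [Preorder ι]
    [LocallyFiniteOrderBot ι] [AddCommMonoid R] [PartialOrder R] [IsOrderedAddMonoid R]
    {f : ι → R} (hf : Antitone f) (hf0 : ∀ i, 0 ≤ f i) (i : ι) :
    #(Iic i) • f i ≤ ∑ j, f j :=
  calc #(Iic i) • f i ≤ ∑ j ∈ Iic i, f j :=
        card_nsmul_le_sum _ _ _ fun _ hj => hf (mem_Iic.mp hj)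
    _ ≤ ∑ j, f j := sum_le_univ_sum_of_nonneg hf0

lemma succ_le_sum_add_succ_mul {R : Type*} [Semiring R] [PartialOrder R] [IsOrderedRing R]
    {K : ℕ} {z : Fin K → R} (hz : Antitone z) (hz0 : ∀ k, 0 ≤ z k) {k : Fin K} {s : R}
    (hcover : 1 ≤ z k + s) :
    ((k : ℕ) + 1 : R) ≤ ∑ l, z l + ((k : ℕ) + 1 : R) * s := by
  have hsum : ((k : ℕ) + 1 : R) * z k ≤ ∑ l, z l := by
    simpa only [Fin.card_Iic, nsmul_eq_mul, Nat.cast_add, Nat.cast_one] using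
      card_Iic_nsmul_le_sum_of_antitone hz hz0 k
  have hk : (0 : R) ≤ (k : ℕ) + 1 := add_nonneg (Nat.cast_nonneg _) zero_le_one
  calc ((k : ℕ) + 1 : R) ≤ ((k : ℕ) + 1) * (z k + s) := le_mul_of_one_le_right hk hcover
    _ = ((k : ℕ) + 1) * z k + ((k : ℕ) + 1) * s := mul_add _ _ _
    _ ≤ ∑ l, z l + ((k : ℕ) + 1) * s := by gcongr

lemma Ordered.antitone {K : ℕ} {z : Fin K → ℝ} (hz : Ordered z) : Antitone z := by
  cases K with
  | zero => exact Subsingleton.antitone z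
  | succ K => exact Fin.antitone_iff_succ_le.mpr fun k => hz k.castSucc k.succ.isLt

section Formulations

variable {N M K : ℕ} {d : Fin N → Fin M → ℝ} {D : Fin (K + 1) → ℝ} {p : ℕ}

lemma cp1Int_subset_fcp1 : CP1Int d D p ⊆ FCP1 d D p := fun _ ⟨hy, hz, hrest⟩ =>
  ⟨fun j => nonneg_and_le_one_of_eq_zero_or_eq_one (hy j),
    fun k => nonneg_and_le_one_of_eq_zero_or_eq_one (hz k), hrest⟩

lemma cp2Int_iff_mem_fcp2 {y : Fin M → ℝ} {r : ℤ} :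
    CP2Int d D p y r ↔ (∀ j, y j = 0 ∨ y j = 1) ∧ (y, (r : ℝ)) ∈ FCP2 d D p := by
  have hcast : (r : ℝ) ≤ K ↔ r ≤ K := by norm_cast
  constructor
  · rintro ⟨hy, hr0, hrK, hrest⟩
    exact ⟨hy, fun j => nonneg_and_le_one_of_eq_zero_or_eq_one (hy j),
      Int.cast_nonneg hr0, hcast.mpr hrK, hrest⟩
  · rintro ⟨hy, -, hr0, hrK, hrest⟩
    exact ⟨hy, Int.cast_nonneg_iff.mp hr0, hcast.mp hrK, hrest⟩

lemma sum_mem_fcp2_of_mem_fcp1 {y : Fin M → ℝ} {z : Fin K → ℝ} (h : (y, z) ∈ FCP1 d D p) :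
    (y, ∑ k, z k) ∈ FCP2 d D p := by
  obtain ⟨hy, hz, hy1, hyp, hord, hcover⟩ := h
  have hz0 (k : Fin K) : 0 ≤ z k := (hz k).1
  have hsum0 : 0 ≤ ∑ k, z k := sum_nonneg fun k _ => hz0 k
  have hsumK : ∑ k, z k ≤ K := by
    simpa using sum_le_card_nsmul univ z 1 fun k _ => (hz k).2
  exact ⟨hy, hsum0, hsumK, hy1, hyp,
    fun i k hk => succ_le_sum_add_succ_mul hord.antitone hz0 (hcover i k hk)⟩

end Formulations

/-- from an integer feasible solution `(y, z)` of `(CP1)` to an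
integer feasible solution `(y, r)` of `(CP2)` with `r = ∑_{k=1}^K z^k`. -/
theorem stmt6 {N M K : ℕ} (hN : 0 < N) (hM : 0 < M)
    (d : Fin N → Fin M → ℝ) (p : ℕ) (hp1 : 1 ≤ p) (hpM : p ≤ M)
    (D : Fin (K + 1) → ℝ) (hD : StrictMono D)
    (hrange : Set.range D = { x : ℝ | ∃ i j, d i j = x })
    (y : Fin M → ℝ) (z : Fin K → ℝ) (hfeas : (y, z) ∈ CP1Int d D p)
    (r : ℤ) (hr : (r : ℝ) = ∑ k, z k) :
    CP2Int d D p y r := by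
  have hrelaxed : (y, (r : ℝ)) ∈ FCP2 d D p :=
    hr ▸ sum_mem_fcp2_of_mem_fcp1 (cp1Int_subset_fcp1 hfeas)
  exact cp2Int_iff_mem_fcp2.mpr ⟨hfeas.1, hrelaxed⟩
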